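/- arXiv:2604.14584 — 3 statements merged into one kernel-verified Lean document; each statement's English description precedes it below -/
import Mathlib

section
/- Let (M,C) be a q-Cartier module over a commutative ring R of characteristic p with M finitely generated, and let N ⊆ M be a finitely generated R-submodule. (1) If R is a finitely generated 𝔽_p-algebra, then N is C-preperiodic, i.e., there exist integers i, j > 0 with C^i(N) = C^{i+j}(N). (2) If R is Noetherian and F-finite and either C(N) ⊆ N or N ⊆ C(N), then N is C-preperiodic. -/
open Pointwise Function

theorem aux_minimal {A T : Type*} [CommRing A] [IsNoetherianRing A] [AddCommGroup T] [Module A T]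
    [Module.Finite A T] (P : Ideal A) (hP : P ∈ minimalPrimes A)
    (N : ℕ → Submodule A T) (hN : Antitone N) :
    ∃ i, ∃ s, s ∉ P ∧ ∀ x ∈ N i, s • x ∈ N (i + 1) := by
  classical
  have hPp : P.IsPrime := hP.1.1
  let S := Localization.AtPrime P
  have hN' : IsNoetherianRing S := IsLocalization.isNoetherianRing P.primeCompl S inferInstance
  have hdim : Ring.KrullDimLE 0 S := Ring.KrullDimLE.of_isLocalization P hP S
  have hArt : IsArtinianRing S := isArtinianRing_iff_isNoetherianRing_krullDimLE_zero.mpr ⟨hN', hdim⟩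
  let f := LocalizedModule.mkLinearMap P.primeCompl T
  have hfin : Module.Finite S (LocalizedModule P.primeCompl T) :=
    Module.Finite.of_isLocalizedModule P.primeCompl f
  have hArtM : IsArtinian S (LocalizedModule P.primeCompl T) := inferInstance
  have hmono : Monotone (fun K : Submodule A T => K.localized' S P.primeCompl f) :=
    (Submodule.localized'gi S P.primeCompl f).gc.monotone_l
  obtain ⟨n, hn⟩ := IsArtinian.monotone_stabilizes (R := S) (M := LocalizedModule P.primeCompl T)
    ⟨fun i => OrderDual.toDual ((N i).localized' S P.primeCompl f), fun i j hij => hmono (hN hij)⟩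
  have hn1 : (N n).localized' S P.primeCompl f = (N (n+1)).localized' S P.primeCompl f :=
    hn (n+1) (Nat.le_succ n)
  refine ⟨n, ?_⟩
  have hpt : ∀ x ∈ N n, ∃ s, s ∉ P ∧ s • x ∈ N (n+1) := by
    intro x hx
    have : f x ∈ (N (n+1)).localized' S P.primeCompl f := by
      rw [← hn1, Submodule.localized'_eq_span]
      exact Submodule.subset_span ⟨x, hx, rfl⟩
    rw [Submodule.mem_localized'] at this
    obtain ⟨m, hm, s, hs⟩ := this
    rw [IsLocalizedModule.mk'_eq_iff] at hs
    have hs' : f m = f (s • x) := by rw [hs]; simp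
    obtain ⟨c, hc⟩ := (IsLocalizedModule.eq_iff_exists P.primeCompl f).mp hs'
    refine ⟨(c * s : P.primeCompl), (c * s : P.primeCompl).2, ?_⟩
    have : ((c * s : P.primeCompl) : A) • x = c • m := by
      rw [hc]; simp [mul_smul, Submonoid.smul_def]
    rw [this]
    exact (N (n+1)).smul_mem (c : A) hm
  obtain ⟨G, hG⟩ := (IsNoetherian.noetherian (N n) : (N n).FG)
  have hGm : ∀ g ∈ G, g ∈ N n := fun g hg => hG ▸ Submodule.subset_span hg
  choose! s hs1 hs2 using hpt
  refine ⟨∏ g ∈ G, s g, ?_, ?_⟩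
  · have : (∏ g ∈ G, s g) ∈ P.primeCompl := prod_mem fun g hg => hs1 g (hGm g hg)
    exact this
  · intro x hx
    rw [← hG] at hx
    induction hx using Submodule.span_induction with
    | mem g hg =>
      rw [← Finset.prod_erase_mul G s hg, mul_smul]
      exact (N (n+1)).smul_mem _ (hs2 g (hGm g hg))
    | zero => simp
    | add x y _ _ h1 h2 => rw [smul_add]; exact add_mem h1 h2
    | smul a x _ h => rw [smul_comm]; exact (N (n+1)).smul_mem _ h

theorem aux_minimal' {R T : Type*} [CommRing R] [IsNoetherianRing R] [AddCommGroup T] [Module R T]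
    [Module.Finite R T] (I P : Ideal R) (hP : P ∈ I.minimalPrimes)
    (N : ℕ → Submodule R T) (hN : Antitone N) (hI : ∀ i, I • (⊤ : Submodule R T) ≤ N i) :
    ∃ i, ∃ s, s ∉ P ∧ ∀ x ∈ N i, s • x ∈ N (i + 1) := by
  rw [Ideal.minimalPrimes_eq_comap] at hP
  obtain ⟨Q, hQ, rfl⟩ := hP
  let T' := T ⧸ (I • (⊤ : Submodule R T))
  have hfin : Module.Finite (R ⧸ I) T' := Module.Finite.of_restrictScalars_finite R _ _
  let π := (I • (⊤ : Submodule R T)).mkQ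
  let N' : ℕ → Submodule (R ⧸ I) T' := fun i =>
    { carrier := π '' (N i)
      add_mem' := by
        rintro _ _ ⟨x, hx, rfl⟩ ⟨y, hy, rfl⟩
        exact ⟨x + y, add_mem hx hy, map_add _ _ _⟩
      zero_mem' := ⟨0, zero_mem _, map_zero _⟩
      smul_mem' := by
        rintro c _ ⟨x, hx, rfl⟩
        obtain ⟨r, rfl⟩ := Ideal.Quotient.mk_surjective c
        exact ⟨r • x, (N i).smul_mem r hx, rfl⟩ }
  obtain ⟨i, s, hs, h⟩ := aux_minimal Q hQ N' (fun i j hij => Set.image_mono (hN hij))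
  obtain ⟨r, rfl⟩ := Ideal.Quotient.mk_surjective s
  refine ⟨i, r, hs, fun x hx => ?_⟩
  obtain ⟨y, hy, hxy⟩ := h (π x) ⟨x, hx, rfl⟩
  have hxy' : π y = π (r • x) := hxy
  have : y - r • x ∈ I • (⊤ : Submodule R T) := (Submodule.Quotient.eq _).mp hxy'
  have h2 := sub_mem hy (hI (i+1) this)
  simpa using h2

theorem aux_desc {R M : Type*} [CommRing R] [IsNoetherianRing R] [AddCommGroup M] [Module R M]
    [Module.Finite R M] (q : ℕ) (hq : 2 ≤ q) (C : M → M)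
    (hCsl : ∀ (a : R) (x : M), C (a ^ q • x) = a • C x)
    (L : ℕ → Submodule R M) (hL : ∀ i, (L (i+1) : Set M) = C '' (L i : Set M))
    (hanti : Antitone L) : ∃ n, L n = L (n+1) := by
  have hmem : ∀ i x, x ∈ L (i+1) ↔ ∃ y ∈ L i, C y = x := by
    intro i x
    rw [← SetLike.mem_coe, hL]; rfl
  let 𝔞 : ℕ → Ideal R := fun i =>
    { carrier := {a | ∀ x ∈ L i, a • x ∈ L (i+1)}
      add_mem' := fun {a b} ha hb x hx => by rw [add_smul]; exact add_mem (ha x hx) (hb x hx)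
      zero_mem' := fun x _ => by simp
      smul_mem' := fun c a ha x hx => by
        rw [smul_eq_mul, mul_smul]; exact (L (i+1)).smul_mem _ (ha x hx) }
  have ha : ∀ i a, a ∈ 𝔞 i ↔ ∀ x ∈ L i, a • x ∈ L (i+1) := fun i a => Iff.rfl
  have hmono : Monotone 𝔞 := monotone_nat_of_le_succ fun i a h => by
    rw [ha] at h ⊢
    intro x hx
    obtain ⟨y, hy, rfl⟩ := (hmem _ _).mp hx
    rw [← hCsl]
    refine (hmem _ _).mpr ⟨_, ?_, rfl⟩
    obtain ⟨k, rfl⟩ := Nat.exists_eq_add_of_le' hq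
    rw [pow_succ, mul_smul]
    exact (L (i+1)).smul_mem _ (h y hy)
  obtain ⟨n, hn⟩ := monotone_stabilizes_iff_noetherian.mpr ‹IsNoetherianRing R› ⟨𝔞, hmono⟩
  replace hn : ∀ m, n ≤ m → 𝔞 n = 𝔞 m := hn
  let 𝔟 : Ideal R :=
    { carrier := {a | ∀ i, ∀ x ∈ L n, a • x ∈ L (n+i)}
      add_mem' := fun {a b} ha hb i x hx => by
        rw [add_smul]; exact add_mem (ha i x hx) (hb i x hx)
      zero_mem' := fun i x _ => by simp
      smul_mem' := fun c a ha i x hx => by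
        rw [smul_eq_mul, mul_smul]; exact (L (n+i)).smul_mem _ (ha i x hx) }
  have hb : ∀ a, a ∈ 𝔟 ↔ ∀ i, ∀ x ∈ L n, a • x ∈ L (n+i) := fun a => Iff.rfl
  have hsq : ∀ a ∈ 𝔞 n, a ^ 2 ∈ 𝔟 := by
    intro a h
    rw [ha] at h
    rw [hb]
    intro i
    induction i with
    | zero => intro x hx; exact (L n).smul_mem _ hx
    | succ i ih =>
      intro x hx
      obtain ⟨z, hz, hzx⟩ := (hmem _ _).mp (h x hx)
      rw [pow_two, mul_smul, ← hzx, ← hCsl]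
      refine (hmem _ _).mpr ⟨_, ?_, rfl⟩
      obtain ⟨k, rfl⟩ := Nat.exists_eq_add_of_le' hq
      rw [pow_add, mul_smul]
      exact (L (n+i)).smul_mem _ (ih z hz)
  by_cases htop : 𝔟 = ⊤
  · refine ⟨n, le_antisymm ?_ (hanti (Nat.le_succ n))⟩
    intro x hx
    have h1 : (1 : R) ∈ 𝔟 := htop ▸ Submodule.mem_top
    simpa using (hb 1).mp h1 1 x hx
  · exfalso
    obtain ⟨P, hP⟩ := Ideal.nonempty_minimalPrimes htop
    have hPp : P.IsPrime := hP.1.1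
    obtain ⟨i, s, hs, h⟩ := aux_minimal' (T := L n) 𝔟 P hP
      (fun i => (L (n+i)).comap (L n).subtype)
      (fun i j hij => Submodule.comap_mono (hanti (by omega)))
      (fun i => by
        rw [Submodule.smul_le]
        intro r hr x _
        exact (hb r).mp hr i x x.2)
    have hs' : s ∈ 𝔞 (n+i) := by
      rw [ha]
      intro x hx
      exact h ⟨x, hanti (Nat.le_add_right n i) hx⟩ hx
    rw [← hn _ (Nat.le_add_right n i)] at hs'
    exact hs (hPp.mem_of_pow_mem 2 (hP.1.2 (hsq s hs')))

/-- The part for finite type algebras, in terms of a finite additive subgroup. -/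
theorem aux_pigeon {R M : Type*} [CommRing R] [AddCommGroup M] [Module R M]
    (L : ℕ → Submodule R M) (B : Set M) (hB : B.Finite)
    (hgen : ∀ i, L i = Submodule.span R ((L i : Set M) ∩ B)) :
    ∃ i j : ℕ, 0 < i ∧ 0 < j ∧ L i = L (i + j) := by
  have hfin : (𝒫 B).Finite := hB.finite_subsets
  obtain ⟨a, b, hab, h⟩ := Set.Finite.exists_lt_map_eq_of_forall_mem
    (t := 𝒫 B) (f := fun i : ℕ => (L (i+1) : Set M) ∩ B)
    (fun i => Set.inter_subset_right) hfin
  refine ⟨a+1, b-a, by omega, by omega, ?_⟩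
  have : a + 1 + (b - a) = b + 1 := by omega
  rw [this, hgen (a+1), hgen (b+1)]
  exact congrArg _ h

theorem aux_box {R M ι : Type*} [CommRing R] [AddCommGroup M] [Module R M] [Fintype ι]
    (p : ℕ) (hp : 0 < p) (htor : ∀ m : M, p • m = 0)
    (x : ι → R)
    (hx : ∀ r : R, r ∈ AddSubgroup.closure (Set.range fun a : ι → ℕ => ∏ i, x i ^ a i))
    (q : ℕ) (hq : 2 ≤ q)
    (C : M →+ M) (hCsl : ∀ (a : R) (x : M), C (a ^ q • x) = a • C x)
    [Module.Finite R M] (L : ℕ → Submodule R M) (hfg : (L 0).FG)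
    (hL : ∀ i, (L (i+1) : Set M) = C '' (L i : Set M)) :
    ∃ i j : ℕ, 0 < i ∧ 0 < j ∧ L i = L (i + j) := by
  classical
  obtain ⟨mon, hmon⟩ : ∃ mon : (ι → ℕ) → R, mon = fun a => ∏ i, x i ^ a i := ⟨_, rfl⟩
  rw [← hmon] at hx
  have mon_add : ∀ a b, mon (a + b) = mon a * mon b := by
    intro a b; simp [hmon, pow_add, Finset.prod_mul_distrib]
  have mon_zero : mon 0 = 1 := by simp [hmon]
  have mon_div : ∀ a, mon a = mon (fun i => a i / q) ^ q * mon (fun i => a i % q) := by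
    intro a
    simp only [hmon]
    rw [← Finset.prod_pow, ← Finset.prod_mul_distrib]
    refine Finset.prod_congr rfl fun i _ => ?_
    rw [← pow_mul, ← pow_add, mul_comm, Nat.div_add_mod]
  obtain ⟨G, hG⟩ := (Module.Finite.fg_top : (⊤ : Submodule R M).FG)
  let gens : ℕ → Set M := fun D => (fun t : (ι → ℕ) × M => mon t.1 • t.2) '' (Set.Iic (fun _ => D) ×ˢ (G : Set M))
  let B : ℕ → AddSubgroup M := fun D => AddSubgroup.closure (gens D)
  have gfin : ∀ D, (gens D).Finite := fun D =>
    ((Set.finite_Iic _).prod G.finite_toSet).image _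
  have Bfin : ∀ D, (B D : Set M).Finite := by
    intro D
    have : AddGroup.FG (B D) :=
      (AddGroup.fg_iff_addSubgroup_fg _).mpr ⟨(gfin D).toFinset, by simp [B]⟩
    have h2 : Finite (B D) := AddCommGroup.finite_of_fg_isAddTorsion _ (by
      intro m
      rw [isOfFinAddOrder_iff_nsmul_eq_zero]
      exact ⟨p, hp, Subtype.ext (htor m)⟩)
    exact Set.toFinite _
  have Bmono : Monotone B := by
    intro D E h
    refine AddSubgroup.closure_mono (Set.image_mono (Set.prod_mono ?_ le_rfl))
    exact Set.Iic_subset_Iic.mpr (fun _ => h)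
  have Bgen : ∀ D a g, (∀ i, a i ≤ D) → g ∈ G → mon a • g ∈ B D := fun D a g ha hg =>
    AddSubgroup.subset_closure ⟨(a, g), ⟨ha, hg⟩, rfl⟩
  have Bsmul : ∀ D E b m, (∀ i, b i ≤ E) → m ∈ B D → mon b • m ∈ B (E + D) := by
    intro D E b m hb hm
    induction hm using AddSubgroup.closure_induction with
    | mem m hm =>
      obtain ⟨⟨a, g⟩, ⟨ha, hg⟩, rfl⟩ := hm
      simp only [← mul_smul, ← mon_add]
      exact Bgen _ _ _ (fun i => add_le_add (hb i) (ha i)) hg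
    | zero => simp
    | add x y _ _ h1 h2 => rw [smul_add]; exact add_mem h1 h2
    | neg x _ h => rw [smul_neg]; exact neg_mem h
  have Badd : ∀ m m', (∃ D, m ∈ B D) → (∃ D, m' ∈ B D) → ∃ D, m + m' ∈ B D := by
    rintro m m' ⟨D, hD⟩ ⟨E, hE⟩
    exact ⟨max D E, add_mem (Bmono (le_max_left _ _) hD) (Bmono (le_max_right _ _) hE)⟩
  have Bex : ∀ m, ∃ D, m ∈ B D := by
    intro m
    have hm : m ∈ Submodule.span R (G : Set M) := hG ▸ Submodule.mem_top
    induction hm using Submodule.span_induction with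
    | mem g hg => exact ⟨0, by simpa [mon_zero] using Bgen 0 0 g (by simp) hg⟩
    | zero => exact ⟨0, zero_mem _⟩
    | add x y _ _ h1 h2 => exact Badd _ _ h1 h2
    | smul r m _ h =>
      have hr := hx r
      induction hr using AddSubgroup.closure_induction with
      | mem r hr =>
        obtain ⟨b, rfl⟩ := hr
        obtain ⟨D, hD⟩ := h
        exact ⟨_, Bsmul D (∑ i, b i) b m
          (fun i => Finset.single_le_sum (fun _ _ => Nat.zero_le _) (Finset.mem_univ i)) hD⟩
      | zero => exact ⟨0, by simp⟩
      | add r s _ _ h1 h2 => rw [add_smul]; exact Badd _ _ h1 h2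
      | neg r _ h => obtain ⟨D, hD⟩ := h; exact ⟨D, by rw [neg_smul]; exact neg_mem hD⟩
  have Bset : ∀ S : Set M, S.Finite → ∃ D, S ⊆ B D := by
    intro S hS
    choose d hd using Bex
    obtain ⟨D, hD⟩ := (hS.image d).bddAbove
    exact ⟨D, fun m hm => Bmono (hD ⟨m, hm, rfl⟩) (hd m)⟩
  obtain ⟨K, hK⟩ := Bset (C '' gens (q-1)) ((gfin _).image _)
  have BC : ∀ d, ∀ m ∈ B d, C m ∈ B (d / q + K) := by
    intro d m hm
    induction hm using AddSubgroup.closure_induction with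
    | mem m hm =>
      obtain ⟨⟨a, g⟩, ⟨ha, hg⟩, rfl⟩ := hm
      simp only
      rw [mon_div, mul_smul, hCsl]
      refine Bsmul _ _ _ _ (fun i => Nat.div_le_div_right (ha i)) (hK ⟨_, ⟨(fun i => a i % q, g), ⟨?_, hg⟩, rfl⟩, rfl⟩)
      intro i
      have := Nat.mod_lt (a i) (show 0 < q by omega)
      show a i % q ≤ q - 1
      omega
    | zero => simp
    | add x y _ _ h1 h2 => rw [map_add]; exact add_mem h1 h2
    | neg x _ h => rw [map_neg]; exact neg_mem h
  obtain ⟨F, hF⟩ := hfg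
  obtain ⟨D0, hD0⟩ := Bset F F.finite_toSet
  obtain ⟨D, hDdef⟩ : ∃ D, D = max D0 (2 * K + 1) := ⟨_, rfl⟩
  have hDle : (q - 1 + D) / q + K ≤ D := by
    have h1 : (q - 1 + D) / q ≤ (D + 1) / 2 := by
      rw [Nat.le_div_iff_mul_le (by norm_num)]
      have h3 := Nat.div_mul_le_self (q - 1 + D) q
      generalize (q - 1 + D) / q = t at h3 ⊢
      obtain ⟨k, rfl⟩ := Nat.exists_eq_add_of_le' hq
      rcases Nat.eq_zero_or_pos t with rfl | ht
      · omega
      · have : k + 2 - 1 = k + 1 := rfl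
        nlinarith
    omega
  refine aux_pigeon L (B D) (Bfin D) fun i => ?_
  refine le_antisymm ?_ (Submodule.span_le.mpr Set.inter_subset_left)
  induction i with
  | zero =>
    conv_lhs => rw [← hF]
    refine Submodule.span_mono fun m hm => ⟨hF ▸ Submodule.subset_span hm, ?_⟩
    exact Bmono (by omega) (hD0 hm)
  | succ i ih =>
    set W := Submodule.span R ((L (i+1) : Set M) ∩ B D) with hW
    have key : ∀ z ∈ Submodule.span R ((L i : Set M) ∩ B D), ∀ r : R, C (r • z) ∈ W := by
      intro z hz
      induction hz using Submodule.span_induction with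
      | mem w hw =>
        intro r
        have hr := hx r
        induction hr using AddSubgroup.closure_induction with
        | mem r hr =>
          obtain ⟨a, rfl⟩ := hr
          rw [mon_div, mul_smul, hCsl]
          refine W.smul_mem _ (Submodule.subset_span ⟨?_, ?_⟩)
          · rw [hL]
            exact ⟨_, (L i).smul_mem _ hw.1, rfl⟩
          · refine Bmono hDle (BC _ _ (Bsmul _ _ _ _ (fun i => ?_) hw.2))
            have := Nat.mod_lt (a i) (show 0 < q by omega)
            omega
        | zero => simp
        | add r s _ _ h1 h2 => rw [add_smul, map_add]; exact add_mem h1 h2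
        | neg r _ h => rw [neg_smul, map_neg]; exact neg_mem h
      | zero => intro r; simp
      | add x y _ _ h1 h2 => intro r; rw [smul_add, map_add]; exact add_mem (h1 r) (h2 r)
      | smul s z _ h => intro r; rw [← mul_smul]; exact h _
    intro y hy
    rw [← SetLike.mem_coe, hL] at hy
    obtain ⟨z, hz, rfl⟩ := hy
    simpa using key z (ih hz) 1

theorem stmt3 {R M : Type*} [CommRing R] [AddCommGroup M] [Module R M]
    (p : ℕ) [Fact p.Prime] [CharP R p]
    (e q : ℕ) (he : 1 ≤ e) (hq : q = p ^ e)
    (C : M → M) (hCadd : ∀ x y : M, C (x + y) = C x + C y)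
    (hCsl : ∀ (a : R) (x : M), C (a ^ q • x) = a • C x)
    [Module.Finite R M] (N : Submodule R M) (hNfg : N.FG) :
    -- (1) if `R` is a finitely generated `𝔽_p`-algebra, then `N` is `C`-preperiodic
    ((ZMod.castHom (dvd_refl p) R).FiniteType →
      ∃ i j : ℕ, 0 < i ∧ 0 < j ∧ C^[i] '' (N : Set M) = C^[i + j] '' (N : Set M)) ∧
    -- (2) if `R` is Noetherian and F-finite and `C(N) ⊆ N` or `N ⊆ C(N)`, then
    -- `N` is `C`-preperiodic
    (IsNoetherianRing R → (frobenius R p).Finite →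
      (C '' (N : Set M) ⊆ (N : Set M) ∨ (N : Set M) ⊆ C '' (N : Set M)) →
      ∃ i j : ℕ, 0 < i ∧ 0 < j ∧ C^[i] '' (N : Set M) = C^[i + j] '' (N : Set M)) := by
  have hpp : p.Prime := Fact.out
  have hq2 : 2 ≤ q := by
    rw [hq]
    exact hpp.two_le.trans (Nat.le_self_pow (by omega) p)
  let C' : M →+ M := AddMonoidHom.mk' C hCadd
  let img : Submodule R M → Submodule R M := fun K =>
    { carrier := C '' (K : Set M)
      add_mem' := by
        rintro _ _ ⟨x, hx, rfl⟩ ⟨y, hy, rfl⟩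
        exact ⟨x + y, add_mem hx hy, hCadd _ _⟩
      zero_mem' := ⟨0, zero_mem _, map_zero C'⟩
      smul_mem' := by
        rintro c _ ⟨x, hx, rfl⟩
        exact ⟨c ^ q • x, K.smul_mem _ hx, hCsl _ _⟩ }
  let L : ℕ → Submodule R M := fun i => img^[i] N
  have hL : ∀ i, (L (i+1) : Set M) = C '' (L i : Set M) := by
    intro i
    simp only [L, Function.iterate_succ_apply']
    rfl
  have hLC : ∀ i, (L i : Set M) = C^[i] '' (N : Set M) := by
    intro i
    induction i with
    | zero => simp [L]
    | succ i ih => rw [hL, ih, Function.iterate_succ', Set.image_comp]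
  have fin : (∃ i j : ℕ, 0 < i ∧ 0 < j ∧ L i = L (i + j)) →
      ∃ i j : ℕ, 0 < i ∧ 0 < j ∧ C^[i] '' (N : Set M) = C^[i + j] '' (N : Set M) := by
    rintro ⟨i, j, hi, hj, h⟩
    exact ⟨i, j, hi, hj, by rw [← hLC, ← hLC, h]⟩
  have fin' : (∃ n, L n = L (n+1)) → ∃ i j : ℕ, 0 < i ∧ 0 < j ∧ L i = L (i + j) := by
    rintro ⟨n, h⟩
    refine ⟨n+1, 1, by omega, by omega, SetLike.coe_injective ?_⟩
    rw [hL, hL, h]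
  refine ⟨fun hft => fin ?_, fun hnoeth _ hcases => fin (fin' ?_)⟩
  · letI : Algebra (ZMod p) R := (ZMod.castHom (dvd_refl p) R).toAlgebra
    have hft' : Algebra.FiniteType (ZMod p) R := hft
    obtain ⟨n, f, hf⟩ := Algebra.FiniteType.iff_quotient_mvPolynomial''.mp hft'
    refine aux_box p hpp.pos (fun m => ?_) (fun i => f (MvPolynomial.X i)) (fun r => ?_) q hq2 C' hCsl
      L hNfg hL
    · rw [← Nat.cast_smul_eq_nsmul R, CharP.cast_eq_zero, zero_smul]
    · obtain ⟨P, rfl⟩ := hf r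
      induction P using MvPolynomial.induction_on' with
      | monomial u a =>
        obtain ⟨k, rfl⟩ := ZMod.natCast_zmod_surjective a
        have : f (MvPolynomial.monomial u (k : ZMod p))
            = k • ∏ i, f (MvPolynomial.X i) ^ u i := by
          rw [MvPolynomial.monomial_eq, map_mul, Finsupp.prod_fintype _ _ (by simp)]
          simp
        rw [this]
        refine nsmul_mem ?_ k
        exact AddSubgroup.subset_closure (Set.mem_range.mpr ⟨(u : Fin n → ℕ), rfl⟩)
      | add a b h1 h2 => rw [map_add]; exact add_mem h1 h2
  · have hmono : Monotone img := fun K K' h => Set.image_mono h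
    rcases hcases with h | h
    · have hanti : Antitone L := antitone_nat_of_succ_le fun i => by
        have h0 : img N ≤ N := h
        simp only [L, Function.iterate_succ_apply]
        exact (hmono.iterate i) h0
      exact aux_desc q hq2 C hCsl L hL hanti
    · have hm : Monotone L := monotone_nat_of_le_succ fun i => by
        have h0 : N ≤ img N := h
        simp only [L, Function.iterate_succ_apply]
        exact (hmono.iterate i) h0
      have hNM : IsNoetherian R M := inferInstance
      obtain ⟨n, hn⟩ := monotone_stabilizes_iff_noetherian.mpr hNM ⟨L, hm⟩
      exact ⟨n, hn (n+1) (Nat.le_succ n)⟩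
end

section
/- Let R be a Noetherian F-finite commutative ring of characteristic p, let (M,C) be an F-pure q-Cartier module over R and let f ∈ R. Then: (1) for real numbers t ≥ s ≥ 0, τ(M,f^t) ⊆ τ(M,f^s); (2) for every real t ≥ 0, τ(M,f^{t+1}) = f·τ(M,f^t); (3) for every real t ≥ 0, C(τ(M,f^{qt})) = τ(M,f^t); (4) for positive integers n and m, τ(M,f^{n/q^m}) = C^m(f^n M). -/
open Pointwise Function

/-- The test module `τ(M, f^t) = ⋃_{m ≥ 0} C^m (f^{⌈t q^m⌉} M)` of an F-pure `q`-Cartier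
module `(M, C)` with respect to `f` at level `t ≥ 0`. -/
def testSet {R M : Type*} [CommRing R] [AddCommGroup M] [Module R M]
    (C : M → M) (q : ℕ) (f : R) (t : ℝ) : Set M :=
  ⋃ m : ℕ, C^[m] '' ((f ^ ⌈t * (q : ℝ) ^ m⌉₊) • (Set.univ : Set M))

theorem iterC_smul {R M : Type*} [CommRing R] [AddCommGroup M] [Module R M]
    (q : ℕ) (C : M → M) (hCsl : ∀ (a : R) (x : M), C (a ^ q • x) = a • C x)
    (m : ℕ) : ∀ (a : R) (x : M), C^[m] (a ^ (q ^ m) • x) = a • C^[m] x := by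
  induction m with
  | zero => intro a x; simp
  | succ k ih =>
    intro a x
    rw [Function.iterate_succ_apply, Function.iterate_succ_apply, pow_succ, pow_mul, hCsl, ih]

theorem mem_testSet_iff {R M : Type*} [CommRing R] [AddCommGroup M] [Module R M]
    (C : M → M) (q : ℕ) (f : R) (t : ℝ) (y : M) :
    y ∈ testSet C q f t ↔ ∃ m : ℕ, ∃ x : M, C^[m] (f ^ ⌈t * (q : ℝ) ^ m⌉₊ • x) = y := by
  simp [testSet, Set.mem_smul_set]

theorem level_mono {R M : Type*} [CommRing R] [AddCommGroup M] [Module R M]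
    (C : M → M) (f : R) (m a b : ℕ) (h : a ≤ b) (x : M) :
    ∃ z : M, C^[m] (f ^ a • z) = C^[m] (f ^ b • x) := by
  obtain ⟨c, rfl⟩ := Nat.exists_eq_add_of_le h
  exact ⟨f ^ c • x, by rw [smul_smul, ← pow_add]⟩

theorem level_up {R M : Type*} [CommRing R] [AddCommGroup M] [Module R M]
    (q : ℕ) (C : M → M) (hCsl : ∀ (a : R) (x : M), C (a ^ q • x) = a • C x)
    (hFpure : Function.Surjective C) (f : R) (t : ℝ) (m j : ℕ) (x : M) :
    ∃ z : M, C^[m + j] (f ^ ⌈t * (q : ℝ) ^ (m + j)⌉₊ • z) =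
      C^[m] (f ^ ⌈t * (q : ℝ) ^ m⌉₊ • x) := by
  obtain ⟨y, rfl⟩ := hFpure.iterate j x
  rw [← iterC_smul q C hCsl j, ← pow_mul, ← Function.iterate_add_apply]
  apply level_mono
  rw [Nat.ceil_le]
  push_cast
  rw [pow_add, ← mul_assoc]
  exact mul_le_mul_of_nonneg_right (Nat.le_ceil _) (by positivity)

theorem stmt8 {R M : Type*} [CommRing R] [AddCommGroup M] [Module R M]
    (p : ℕ) [Fact p.Prime] [CharP R p] [IsNoetherianRing R]
    (hFF : (frobenius R p).Finite)
    (e q : ℕ) (he : 1 ≤ e) (hq : q = p ^ e)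
    (C : M → M) (hCadd : ∀ x y : M, C (x + y) = C x + C y)
    (hCsl : ∀ (a : R) (x : M), C (a ^ q • x) = a • C x)
    [Module.Finite R M] (hFpure : Function.Surjective C) (f : R) :
    -- (1) monotonicity
    (∀ s t : ℝ, 0 ≤ s → s ≤ t → testSet C q f t ⊆ testSet C q f s) ∧
    -- (2) `τ(M, f^{t+1}) = f · τ(M, f^t)`
    (∀ t : ℝ, 0 ≤ t → testSet C q f (t + 1) = f • testSet C q f t) ∧
    -- (3) `C(τ(M, f^{qt})) = τ(M, f^t)`
    (∀ t : ℝ, 0 ≤ t → C '' testSet C q f ((q : ℝ) * t) = testSet C q f t) ∧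
    -- (4) `τ(M, f^{n/q^m}) = C^m(f^n M)`
    (∀ n m : ℕ, 0 < n → 0 < m →
        testSet C q f ((n : ℝ) / (q : ℝ) ^ m) =
          C^[m] '' ((f ^ n) • (Set.univ : Set M))) := by
  have hq0 : 0 < q := by
    rw [hq]; exact pow_pos (Fact.out : p.Prime).pos e
  have hqR : (0 : ℝ) < q := by exact_mod_cast hq0
  refine ⟨?_, ?_, ?_, ?_⟩
  · intro s t hs hst y hy
    rw [mem_testSet_iff] at hy ⊢
    obtain ⟨m, x, rfl⟩ := hy
    refine ⟨m, level_mono C f m _ _ (Nat.ceil_mono ?_) x⟩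
    exact mul_le_mul_of_nonneg_right hst (by positivity)
  · intro t ht
    have key : ∀ (m : ℕ) (x : M), C^[m] (f ^ ⌈(t + 1) * (q : ℝ) ^ m⌉₊ • x) =
        f • C^[m] (f ^ ⌈t * (q : ℝ) ^ m⌉₊ • x) := by
      intro m x
      have h : ⌈(t + 1) * (q : ℝ) ^ m⌉₊ = q ^ m + ⌈t * (q : ℝ) ^ m⌉₊ := by
        rw [add_mul, one_mul, ← Nat.cast_pow, Nat.ceil_add_natCast (by positivity), add_comm]
      rw [h, pow_add, ← smul_smul, iterC_smul q C hCsl m]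
    ext y
    rw [Set.mem_smul_set, mem_testSet_iff]
    constructor
    · rintro ⟨m, x, rfl⟩
      exact ⟨_, (mem_testSet_iff _ _ _ _ _).2 ⟨m, x, rfl⟩, (key m x).symm⟩
    · rintro ⟨z, hz, rfl⟩
      obtain ⟨m, x, rfl⟩ := (mem_testSet_iff _ _ _ _ _).1 hz
      exact ⟨m, x, key m x⟩
  · intro t ht
    have key : ∀ (m : ℕ) (x : M), C (C^[m] (f ^ ⌈(q : ℝ) * t * (q : ℝ) ^ m⌉₊ • x)) =
        C^[m + 1] (f ^ ⌈t * (q : ℝ) ^ (m + 1)⌉₊ • x) := by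
      intro m x
      rw [Function.iterate_succ_apply']
      have h : (q : ℝ) * t * (q : ℝ) ^ m = t * (q : ℝ) ^ (m + 1) := by ring
      rw [h]
    ext y
    rw [Set.mem_image, mem_testSet_iff]
    constructor
    · rintro ⟨z, hz, rfl⟩
      obtain ⟨m, x, rfl⟩ := (mem_testSet_iff _ _ _ _ _).1 hz
      exact ⟨m + 1, x, (key m x).symm⟩
    · rintro ⟨m, x, rfl⟩
      obtain ⟨z, hz⟩ := level_up q C hCsl hFpure f t m 1 x
      exact ⟨_, (mem_testSet_iff _ _ _ _ _).2 ⟨m, z, rfl⟩, (key m z).trans hz⟩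
  · intro n m hn hm
    have hceil : ∀ j : ℕ, ⌈(n : ℝ) / (q : ℝ) ^ m * (q : ℝ) ^ (m + j)⌉₊ = n * q ^ j := by
      intro j
      have h : (n : ℝ) / (q : ℝ) ^ m * (q : ℝ) ^ (m + j) = ((n * q ^ j : ℕ) : ℝ) := by
        push_cast
        rw [pow_add]
        field_simp
      rw [h, Nat.ceil_natCast]
    have hceil0 : ⌈(n : ℝ) / (q : ℝ) ^ m * (q : ℝ) ^ m⌉₊ = n := by
      simpa using hceil 0
    have hR : ∀ y : M, y ∈ C^[m] '' ((f ^ n) • (Set.univ : Set M)) ↔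
        ∃ x : M, C^[m] (f ^ n • x) = y := by
      intro y
      simp [Set.mem_smul_set]
    ext y
    rw [hR, mem_testSet_iff]
    constructor
    · rintro ⟨k, x, rfl⟩
      rcases le_total m k with h | h
      · obtain ⟨j, rfl⟩ := Nat.exists_eq_add_of_le h
        refine ⟨C^[j] x, ?_⟩
        rw [hceil, Function.iterate_add_apply, pow_mul, iterC_smul q C hCsl j]
      · obtain ⟨j, rfl⟩ := Nat.exists_eq_add_of_le h
        obtain ⟨z, hz⟩ := level_up q C hCsl hFpure f ((n : ℝ) / (q : ℝ) ^ (k + j)) k j x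
        rw [hceil0] at hz
        exact ⟨z, hz⟩
    · rintro ⟨x, rfl⟩
      exact ⟨m, x, by rw [hceil0]⟩
end

section
/- Let R be a Noetherian F-finite commutative ring of characteristic p, let (M,C) be an F-pure q-Cartier module over R and let f ∈ R. Then: (1) for every rational number t with 0 < t ≤ 1 whose denominator is prime to p (so that −t defines an element of ℤ_p via the embedding ℚ → ℚ_p), one has t ∈ FJN⁻(M,f) if and only if −t ∈ ν_f(q^∞;M); (2) 0 ∈ ν_f(q^∞;M) if and only if 0 ∈ FJN⁺(M,f). -/
open Pointwise Function

/-- The set of ν-invariants of level `m`. -/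
def nuLevel {R M : Type*} [CommRing R] [AddCommGroup M] [Module R M]
    (C : M → M) (f : R) (N : Set M) (m : ℕ) : Set ℕ :=
  {n | C^[m] '' (f ^ n • N) ≠ C^[m] '' (f ^ (n + 1) • N)}

/-- The set of ν-invariants of infinite level. -/
def nuInfinite {R M : Type*} [CommRing R] [AddCommGroup M] [Module R M]
    (p : ℕ) [Fact p.Prime] (q : ℕ) (C : M → M) (f : R) (N : Set M) : Set ℤ_[p] :=
  {α | ∀ m : ℕ, 1 ≤ m → ∃ n ∈ nuLevel C f N m, ((q : ℤ_[p]) ^ m) ∣ (α - (n : ℤ_[p]))}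

/-- The set `FJN⁺(M, f)` of right F-jumping exponents. -/
def FJNplus {R M : Type*} [CommRing R] [AddCommGroup M] [Module R M]
    (C : M → M) (q : ℕ) (f : R) : Set ℝ :=
  {t | 0 ≤ t ∧ ∀ ε : ℝ, 0 < ε → testSet C q f (t + ε) ⊂ testSet C q f t}

/-- The set `FJN⁻(M, f)` of left F-jumping exponents. -/
def FJNminus {R M : Type*} [CommRing R] [AddCommGroup M] [Module R M]
    (C : M → M) (q : ℕ) (f : R) : Set ℝ :=
  {t | 0 < t ∧ ∀ ε : ℝ, 0 < ε → ε < t → testSet C q f t ⊂ testSet C q f (t - ε)}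

section Helpers

variable {R M : Type*} [CommRing R] [AddCommGroup M] [Module R M]

/-- `C^m (f^n M)` -/
def imgSet (C : M → M) (f : R) (m n : ℕ) : Set M :=
  C^[m] '' (f ^ n • (Set.univ : Set M))

theorem mem_imgSet {C : M → M} {f : R} {m n : ℕ} {x : M} :
    x ∈ imgSet C f m n ↔ ∃ y, C^[m] (f ^ n • y) = x := by
  simp [imgSet, Set.mem_smul_set]

theorem iter_add {C : M → M} (hCadd : ∀ x y : M, C (x + y) = C x + C y) (m : ℕ) (x y : M) :
    C^[m] (x + y) = C^[m] x + C^[m] y := by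
  induction m generalizing x y with
  | zero => rfl
  | succ m ih => simp [Function.iterate_succ_apply, hCadd, ih]

theorem iter_smul {C : M → M} {q : ℕ} (hCsl : ∀ (a : R) (x : M), C (a ^ q • x) = a • C x)
    (m : ℕ) (a : R) (x : M) : C^[m] (a ^ (q ^ m) • x) = a • C^[m] x := by
  induction m generalizing x with
  | zero => simp
  | succ m ih =>
    rw [Function.iterate_succ_apply, Function.iterate_succ_apply, pow_succ, pow_mul, hCsl, ih]

theorem imgSet_anti (C : M → M) (f : R) (m : ℕ) {n n' : ℕ} (h : n ≤ n') :
    imgSet C f m n' ⊆ imgSet C f m n := by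
  intro x hx
  obtain ⟨y, rfl⟩ := mem_imgSet.1 hx
  refine mem_imgSet.2 ⟨f ^ (n' - n) • y, ?_⟩
  rw [smul_smul, ← pow_add, Nat.add_sub_cancel' h]

/-- `C^m (f^n M)` as a submodule -/
def imgSub {C : M → M} {q : ℕ} (hCadd : ∀ x y : M, C (x + y) = C x + C y)
    (hCsl : ∀ (a : R) (x : M), C (a ^ q • x) = a • C x) (f : R) (m n : ℕ) : Submodule R M where
  carrier := imgSet C f m n
  zero_mem' := by
    refine mem_imgSet.2 ⟨0, ?_⟩
    have := iter_add hCadd m 0 0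
    simpa using this
  add_mem' := by
    intro x y hx hy
    obtain ⟨x, rfl⟩ := mem_imgSet.1 hx
    obtain ⟨y, rfl⟩ := mem_imgSet.1 hy
    exact mem_imgSet.2 ⟨x + y, by rw [smul_add, iter_add hCadd]⟩
  smul_mem' := by
    intro a x hx
    obtain ⟨x, rfl⟩ := mem_imgSet.1 hx
    exact mem_imgSet.2 ⟨a ^ (q ^ m) • x, by rw [smul_comm, iter_smul hCsl]⟩

theorem imgSet_mul {C : M → M} {q : ℕ} (hCsl : ∀ (a : R) (x : M), C (a ^ q • x) = a • C x)
    (hFpure : Function.Surjective C) (f : R) (m k n : ℕ) :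
    imgSet C f (m + k) (n * q ^ k) = imgSet C f m n := by
  ext x
  simp only [mem_imgSet, Function.iterate_add_apply, pow_mul, iter_smul hCsl]
  constructor
  · rintro ⟨y, rfl⟩
    exact ⟨_, rfl⟩
  · rintro ⟨y, rfl⟩
    obtain ⟨z, rfl⟩ := (hFpure.iterate k) y
    exact ⟨z, rfl⟩

theorem testSet_eq (C : M → M) (q : ℕ) (f : R) (t : ℝ) :
    testSet C q f t = ⋃ m : ℕ, imgSet C f m ⌈t * (q : ℝ) ^ m⌉₊ := rfl

theorem step_mono {C : M → M} {q : ℕ} (hCsl : ∀ (a : R) (x : M), C (a ^ q • x) = a • C x)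
    (hFpure : Function.Surjective C) (f : R) (t : ℝ) :
    Monotone fun m : ℕ => imgSet C f m ⌈t * (q : ℝ) ^ m⌉₊ := by
  refine monotone_nat_of_le_succ fun m => ?_
  have h := imgSet_mul hCsl hFpure f m 1 ⌈t * (q : ℝ) ^ m⌉₊
  rw [pow_one] at h
  show imgSet C f m _ ⊆ _
  rw [← h]
  apply imgSet_anti
  rw [Nat.ceil_le, pow_succ, ← mul_assoc]
  push_cast
  exact mul_le_mul_of_nonneg_right (Nat.le_ceil _) (Nat.cast_nonneg _)

theorem testSet_anti (C : M → M) (q : ℕ) (f : R) {s t : ℝ} (h : s ≤ t) :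
    testSet C q f t ⊆ testSet C q f s := by
  rw [testSet_eq, testSet_eq]
  refine Set.iUnion_mono fun m => imgSet_anti _ _ _ (Nat.ceil_mono ?_)
  exact mul_le_mul_of_nonneg_right h (by positivity)

theorem testSet_stab [IsNoetherian R M] {C : M → M} {q : ℕ}
    (hCadd : ∀ x y : M, C (x + y) = C x + C y)
    (hCsl : ∀ (a : R) (x : M), C (a ^ q • x) = a • C x)
    (hFpure : Function.Surjective C) (f : R) (t : ℝ) :
    ∃ N : ℕ, ∀ m, N ≤ m → testSet C q f t = imgSet C f m ⌈t * (q : ℝ) ^ m⌉₊ := by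
  let g : ℕ →o Submodule R M :=
    ⟨fun m => imgSub hCadd hCsl f m ⌈t * (q : ℝ) ^ m⌉₊, step_mono hCsl hFpure f t⟩
  obtain ⟨N, hN⟩ := monotone_stabilizes_iff_noetherian.2 ‹IsNoetherian R M› g
  have hN' : ∀ m, N ≤ m → imgSet C f N ⌈t * (q : ℝ) ^ N⌉₊ = imgSet C f m ⌈t * (q : ℝ) ^ m⌉₊ :=
    fun m hm => congrArg (fun S : Submodule R M => (S : Set M)) (hN m hm)
  refine ⟨N, fun m hm => ?_⟩
  rw [testSet_eq]
  apply Set.Subset.antisymm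
  · refine Set.iUnion_subset fun k => ?_
    rw [← hN' m hm, hN' (max k N) (le_max_right _ _)]
    exact step_mono hCsl hFpure f t (le_max_left k N)
  · exact Set.subset_iUnion (fun m : ℕ => imgSet C f m ⌈t * (q : ℝ) ^ m⌉₊) m

theorem testSet_div {C : M → M} {q : ℕ} (hq : 0 < q)
    (hCsl : ∀ (a : R) (x : M), C (a ^ q • x) = a • C x)
    (hFpure : Function.Surjective C) (f : R) (m n : ℕ) :
    testSet C q f ((n : ℝ) / (q : ℝ) ^ m) = imgSet C f m n := by
  have hq' : (q : ℝ) ≠ 0 := by positivity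
  have key : ∀ k, imgSet C f (m + k) ⌈((n : ℝ) / (q : ℝ) ^ m) * (q : ℝ) ^ (m + k)⌉₊
      = imgSet C f m n := by
    intro k
    have : ((n : ℝ) / (q : ℝ) ^ m) * (q : ℝ) ^ (m + k) = ((n * q ^ k : ℕ) : ℝ) := by
      push_cast
      rw [pow_add]
      field_simp
    rw [this, Nat.ceil_natCast, imgSet_mul hCsl hFpure]
  rw [testSet_eq]
  apply Set.Subset.antisymm
  · refine Set.iUnion_subset fun k => ?_
    rw [← key k]
    exact step_mono hCsl hFpure f _ (Nat.le_add_left k m)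
  · refine Set.Subset.trans ?_ (Set.subset_iUnion _ m)
    exact (key 0).ge

theorem nuLevel_mod {C : M → M} {q : ℕ}
    (hCsl : ∀ (a : R) (x : M), C (a ^ q • x) = a • C x)
    (f : R) {m m' n : ℕ} (hm : m ≤ m') (hn : n ∈ nuLevel C f (Set.univ : Set M) m') :
    n % q ^ m ∈ nuLevel C f (Set.univ : Set M) m := by
  intro h
  apply hn
  change imgSet C f m (n % q ^ m) = imgSet C f m (n % q ^ m + 1) at h
  change imgSet C f m' n = imgSet C f m' (n + 1)
  obtain ⟨k, rfl⟩ := Nat.exists_eq_add_of_le' hm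
  apply Set.Subset.antisymm _ (imgSet_anti _ _ _ (Nat.le_add_right n 1))
  intro x hx
  obtain ⟨y, rfl⟩ := mem_imgSet.1 hx
  have hy : C^[m] (f ^ (n % q ^ m) • y) ∈ imgSet C f m (n % q ^ m + 1) := by
    rw [← h]
    exact mem_imgSet.2 ⟨y, rfl⟩
  obtain ⟨z, hz⟩ := mem_imgSet.1 hy
  refine mem_imgSet.2 ⟨z, ?_⟩
  have e1 : ∀ (w : M) (j : ℕ), f ^ ((n / q ^ m) * q ^ m + j) • w
      = (f ^ (n / q ^ m)) ^ (q ^ m) • (f ^ j • w) := by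
    intro w j
    rw [smul_smul, ← pow_mul, ← pow_add]
  have e2 : n = (n / q ^ m) * q ^ m + n % q ^ m := (Nat.div_add_mod' n (q ^ m)).symm
  rw [Function.iterate_add_apply, Function.iterate_add_apply]
  congr 1
  conv_rhs => rw [e2]
  conv_lhs => rw [e2]
  rw [add_assoc, e1, e1, iter_smul hCsl, iter_smul hCsl, hz]

theorem mem_nuLevel_iff {C : M → M} {q : ℕ} (hq : 0 < q)
    (hCsl : ∀ (a : R) (x : M), C (a ^ q • x) = a • C x)
    (hFpure : Function.Surjective C) (f : R) (m n : ℕ) :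
    n ∈ nuLevel C f (Set.univ : Set M) m ↔
      testSet C q f ((n : ℝ) / (q : ℝ) ^ m) ≠ testSet C q f (((n + 1 : ℕ) : ℝ) / (q : ℝ) ^ m) := by
  rw [testSet_div hq hCsl hFpure, testSet_div hq hCsl hFpure]
  rfl

/-- The approximating numerators. -/
theorem exists_num {q : ℕ} (hq : 1 < q) (t : ℚ) (ht : 0 < t) (hcop : Nat.Coprime q t.den) (m : ℕ) :
    ∃ n : ℕ, (n : ℚ) = t * (q : ℚ) ^ (t.den.totient * m) - t := by
  have h1 : q ^ (t.den.totient * m) ≡ 1 [MOD t.den] := by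
    rw [pow_mul]
    simpa using (Nat.ModEq.pow_totient hcop).pow m
  obtain ⟨c, hc⟩ := (Nat.modEq_iff_dvd' (Nat.one_le_pow _ _ (by omega))).1 h1.symm
  have hnum : 0 < t.num := Rat.num_pos.2 ht
  refine ⟨t.num.toNat * c, ?_⟩
  have h2 : ((t.num.toNat : ℕ) : ℚ) = t.num := by
    exact_mod_cast Int.toNat_of_nonneg hnum.le
  have h3 : (q : ℚ) ^ (t.den.totient * m) = t.den * c + 1 := by
    have : q ^ (t.den.totient * m) = t.den * c + 1 := by
      have := Nat.one_le_pow (t.den.totient * m) q (by omega)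
      omega
    exact_mod_cast this
  have h4 : t * t.den = t.num := Rat.mul_den_eq_num t
  push_cast
  rw [h2, h3, ← h4]
  ring

end Helpers

theorem stmt12 {R M : Type*} [CommRing R] [AddCommGroup M] [Module R M]
    (p : ℕ) [Fact p.Prime] [CharP R p] [IsNoetherianRing R]
    (hFF : (frobenius R p).Finite)
    (e q : ℕ) (he : 1 ≤ e) (hq : q = p ^ e)
    (C : M → M) (hCadd : ∀ x y : M, C (x + y) = C x + C y)
    (hCsl : ∀ (a : R) (x : M), C (a ^ q • x) = a • C x)
    [Module.Finite R M] (hFpure : Function.Surjective C) (f : R) :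
    -- (1) for rational `t ∈ (0,1]` with denominator prime to `p`,
    -- `t ∈ FJN⁻(M,f)` iff `-t ∈ ν_f(q^∞; M)`
    (∀ t : ℚ, 0 < t → t ≤ 1 → ¬ (p ∣ t.den) →
      ∀ α : ℤ_[p], (α : ℚ_[p]) = ((-t : ℚ) : ℚ_[p]) →
        ((t : ℝ) ∈ FJNminus C q f ↔ α ∈ nuInfinite p q C f (Set.univ : Set M))) ∧
    -- (2) `0 ∈ ν_f(q^∞; M)` iff `0 ∈ FJN⁺(M,f)`
    ((0 : ℤ_[p]) ∈ nuInfinite p q C f (Set.univ : Set M) ↔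
      (0 : ℝ) ∈ FJNplus C q f) := by
  have hp : p.Prime := Fact.out
  have hq1 : 1 < q := by rw [hq]; exact Nat.one_lt_pow (by omega) hp.one_lt
  have hq0 : 0 < q := by omega
  have hqR : (1 : ℝ) < q := by exact_mod_cast hq1
  have hdvd : ∀ (m : ℕ) (z : ℤ), ((q : ℤ_[p]) ^ m ∣ (z : ℤ_[p])) ↔ ((q : ℤ) ^ m ∣ z) := by
    intro m z
    have := PadicInt.pow_p_dvd_int_iff (p := p) (e * m) z
    rw [hq]
    push_cast
    rw [← pow_mul, ← pow_mul]
    simpa using this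
  have hmod : ∀ (m n : ℕ), ((q : ℤ_[p]) ^ m ∣ (n : ℤ_[p]) - ((n % q ^ m : ℕ) : ℤ_[p])) := by
    intro m n
    have := (hdvd m ((n : ℤ) - ((n % q ^ m : ℕ) : ℤ))).2 (by
      refine ⟨((n / q ^ m : ℕ) : ℤ), ?_⟩
      have := Nat.div_add_mod n (q ^ m)
      zify at this ⊢
      linarith)
    rw [Int.cast_sub, Int.cast_natCast, Int.cast_natCast] at this
    exact this
  have hmod' : ∀ (m n n' : ℕ), n < q ^ m → ((q : ℤ_[p]) ^ m ∣ (n : ℤ_[p]) - (n' : ℤ_[p])) →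
      n' % q ^ m = n := by
    intro m n n' hn h
    have h2 : ((q ^ m : ℕ) : ℤ) ∣ (n : ℤ) - (n' : ℤ) := by
      push_cast
      rw [← hdvd]
      simpa using h
    have h3 := (Nat.modEq_iff_dvd).2 h2
    rw [Nat.ModEq, Nat.mod_eq_of_lt hn] at h3
    exact h3
  refine ⟨?_, ?_⟩
  · intro t ht0 ht1 htd α hα
    have hcop : Nat.Coprime q t.den := by
      rw [hq]
      exact ((Nat.Prime.coprime_iff_not_dvd hp).2 htd).pow_left e
    have hφ : 1 ≤ t.den.totient := Nat.totient_pos.2 t.den_pos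
    have htR : (0 : ℝ) < t := by exact_mod_cast ht0
    have htR1 : (t : ℝ) ≤ 1 := by exact_mod_cast ht1
    choose n hn using exists_num hq1 t ht0 hcop
    have hnR : ∀ m, (n m : ℝ) = t * (q : ℝ) ^ (t.den.totient * m) - t := by
      intro m
      exact_mod_cast congrArg (fun x : ℚ => (x : ℝ)) (hn m)
    have hnα : ∀ m, α - (n m : ℤ_[p]) = (q : ℤ_[p]) ^ (t.den.totient * m) * α := by
      intro m
      apply Subtype.coe_injective
      have h := congrArg (fun x : ℚ => (x : ℚ_[p])) (hn m)
      push_cast at h hα ⊢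
      rw [h, hα]
      ring
    have hceil : ∀ m, ⌈(t : ℝ) * (q : ℝ) ^ (t.den.totient * m)⌉₊ = n m + 1 := by
      intro m
      rw [Nat.ceil_eq_iff (by omega)]
      have := hnR m
      constructor
      · rw [Nat.add_sub_cancel]
        linarith
      · push_cast
        linarith
    have hlt : ∀ m, n m < q ^ (t.den.totient * m) := by
      intro m
      have h1 := hnR m
      have h2 : (0 : ℝ) < (q : ℝ) ^ (t.den.totient * m) := by positivity
      have : (n m : ℝ) < ((q ^ (t.den.totient * m) : ℕ) : ℝ) := by
        push_cast
        nlinarith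
      exact_mod_cast this
    constructor
    · rintro ⟨-, hJ⟩ m hm
      have hmm : m ≤ t.den.totient * m := Nat.le_mul_of_pos_left m hφ
      have hmem : n m ∈ nuLevel C f (Set.univ : Set M) (t.den.totient * m) := by
        rw [mem_nuLevel_iff hq0 hCsl hFpure]
        intro heq
        have hQ : (0 : ℝ) < (q : ℝ) ^ (t.den.totient * m) := by positivity
        have hQ1 : (1 : ℝ) < (q : ℝ) ^ (t.den.totient * m) := one_lt_pow₀ hqR (by
          have : 0 < t.den.totient * m := by positivity
          omega)
        have h1 := hJ (t / (q : ℝ) ^ (t.den.totient * m)) (by positivity)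
          (div_lt_self htR hQ1)
        have h2 : (t : ℝ) - t / (q : ℝ) ^ (t.den.totient * m)
            = (n m : ℝ) / (q : ℝ) ^ (t.den.totient * m) := by
          rw [hnR]
          field_simp
        rw [h2, heq] at h1
        refine h1.2 (testSet_anti C q f ?_)
        rw [le_div_iff₀ hQ]
        push_cast
        rw [hnR]
        linarith
      refine ⟨n m % q ^ m, nuLevel_mod hCsl f hmm hmem, ?_⟩
      have h3 : α - ((n m % q ^ m : ℕ) : ℤ_[p])
          = (α - (n m : ℤ_[p])) + ((n m : ℤ_[p]) - ((n m % q ^ m : ℕ) : ℤ_[p])) := by ring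
      rw [h3]
      refine dvd_add ?_ (hmod m (n m))
      rw [hnα]
      exact (pow_dvd_pow _ hmm).mul_right _
    · intro hν
      refine ⟨htR, fun ε hε hεt => ?_⟩
      refine ⟨testSet_anti C q f (by linarith), fun hsub => ?_⟩
      obtain ⟨N, hN⟩ := testSet_stab hCadd hCsl hFpure f (t : ℝ)
      obtain ⟨K, hK⟩ := pow_unbounded_of_one_lt ((t : ℝ) / ε) hqR
      let m := max (max N K) 1
      have hmm : m ≤ t.den.totient * m := Nat.le_mul_of_pos_left m hφ
      have hm1 : 1 ≤ t.den.totient * m := le_trans (le_max_right _ _) hmm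
      have hmN : N ≤ t.den.totient * m :=
        le_trans (le_trans (le_max_left _ _) (le_max_left _ _)) hmm
      have hmK : K ≤ t.den.totient * m :=
        le_trans (le_trans (le_max_right _ _) (le_max_left _ _)) hmm
      obtain ⟨n', hn', hd⟩ := hν _ hm1
      have hnn : n' % q ^ (t.den.totient * m) = n m := by
        apply hmod' _ _ _ (hlt m)
        have h3 : (n m : ℤ_[p]) - (n' : ℤ_[p])
          = (α - (n' : ℤ_[p])) - (α - (n m : ℤ_[p])) := by ring
        rw [h3]
        refine dvd_sub hd ?_
        rw [hnα]
        exact dvd_mul_right _ _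
      have hmem := nuLevel_mod hCsl f le_rfl hn'
      rw [hnn] at hmem
      apply hmem
      change imgSet C f _ _ = imgSet C f _ _
      apply Set.Subset.antisymm _ (imgSet_anti _ _ _ (Nat.le_add_right _ 1))
      rw [← hceil m, ← hN _ hmN, ← testSet_div hq0 hCsl hFpure]
      refine Set.Subset.trans (testSet_anti C q f ?_) hsub
      have hQ : (0 : ℝ) < (q : ℝ) ^ (t.den.totient * m) := by positivity
      have hQ2 : (t : ℝ) / ε < (q : ℝ) ^ (t.den.totient * m) :=
        lt_of_lt_of_le hK (pow_le_pow_right₀ hqR.le hmK)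
      rw [div_lt_iff₀ hε] at hQ2
      rw [le_div_iff₀ hQ, hnR]
      nlinarith
  · have h0 : ∀ m, (0 : ℕ) ∈ nuLevel C f (Set.univ : Set M) m ↔
        testSet C q f 0 ≠ testSet C q f (1 / (q : ℝ) ^ m) := by
      intro m
      have := mem_nuLevel_iff hq0 hCsl hFpure f m 0
      simpa using this
    constructor
    · intro hν
      refine ⟨le_rfl, fun ε hε => ?_⟩
      refine ⟨testSet_anti C q f (by linarith), fun hsub => ?_⟩
      obtain ⟨K, hK⟩ := pow_unbounded_of_one_lt (1 / ε) hqR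
      obtain ⟨n', hn', hd⟩ := hν (K + 1) (by omega)
      have hnn : n' % q ^ (K + 1) = 0 :=
        hmod' _ _ _ (by positivity) (by simpa using hd)
      have hmem := nuLevel_mod hCsl f le_rfl hn'
      rw [hnn, h0] at hmem
      apply hmem
      have hQ : (0 : ℝ) < (q : ℝ) ^ (K + 1) := by positivity
      apply Set.Subset.antisymm _ (testSet_anti C q f (by positivity))
      refine hsub.trans (testSet_anti C q f ?_)
      have hQ2 : 1 / ε < (q : ℝ) ^ (K + 1) :=
        lt_of_lt_of_le hK (pow_le_pow_right₀ hqR.le (by omega))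
      rw [div_lt_iff₀ hε] at hQ2
      rw [div_le_iff₀ hQ]
      linarith
    · rintro ⟨-, hJ⟩ m hm
      refine ⟨0, (h0 m).2 fun heq => ?_, by simp⟩
      have h1 := hJ (1 / (q : ℝ) ^ m) (by positivity)
      rw [zero_add, heq] at h1
      exact h1.2 subset_rfl
end
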